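/- (8/27)·Im Li₄((1+i)/4) − Im Li₄(−i/2) − (16/3)·Im Li₄((1+i)/2) + (π log³2)/72 − (π³/32)·log 2 = −(80/27)·β(4). (This is the ladder relation Ḡ₄ − (2/3)F̄₄ − β(3) log 2 = −(80/27) β(4), using β(3) = π³/32.) -/

import Mathlib

/-!
The ladder is a specialization of a functional equation for `Li₄` in one real variable. Let
`p = ρ e^{iθ}` run along the line `Re p = 1 / 2` for `π / 4 ≤ θ ≤ π / 3`, so that `p̄ = 1 - p` and
`ρ = 1 / (2 cos θ)`. The seven functions `-p³, p², p, -p² / p̄, p / p̄, (p / p̄)³, -p / p̄` of `θ`, all in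
the closed unit disc, have the property that `R` and `1 - R` are both products of powers of `p`, `p̄`,
`1 + p`, `1 - p p̄`, `sin θ` and constants. For each of them `-6 Li₄(R) + 6 L Li₃(R) - 3 L² Li₂(R)`, where `L`
is the logarithm of `R` normalized to vanish at `θ = π / 4`, has derivative `3 L² L' log (1 - R)`. With the
weights `-8, 27, -72, 72, 216, -8, 144` the imaginary parts of these derivatives add up to the derivative
of an explicit polynomial in `log ρ` and `θ` (`total_hasDerivAt`). Hence the imaginary part of the weighted
sum changes between `π / 4` and `π / 3` by an elementary amount (`total_im_sub_prim`).

At `θ = π / 4` all `L` vanish and the sum is `-162` times the left-hand side of the ladder without its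
elementary terms, plus a multiple of `Im Li₄(i) = β(4)` (`total_quarter`). At `θ = π / 3` all arguments are
sixth roots of unity, and the distribution relations together with `Li₂(1) = π² / 6` and
`Im Li₃(e^{2πi/3}) = 2π³ / 81` evaluate the sum as `-(20 / 3) π³ log 2` (`total_third`).

Some arguments lie on the unit circle, where `Li₂` is differentiated through the radial limit in
`Li_exp_hasDerivAt`.
-/

open Complex

/-- The polylogarithm `Li n z = ∑_{k ≥ 1} z^k / k^n`. -/
noncomputable def Li (n : ℕ) (z : ℂ) : ℂ := ∑' k : ℕ, z ^ (k + 1) / ((k + 1 : ℕ) : ℂ) ^ n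

/-- `β(4) = ∑_{k ≥ 0} (−1)^k/(2k+1)⁴`. -/
noncomputable def beta4 : ℝ := ∑' k : ℕ, (-1 : ℝ) ^ k / ((2 * k + 1 : ℕ) : ℝ) ^ 4

section

open Filter Topology Set

/-! ### Polylogarithms on the closed unit disc -/

theorem Li_term_norm_le (n k : ℕ) {z : ℂ} (hz : ‖z‖ ≤ 1) :
    ‖z ^ (k + 1) / ((k + 1 : ℕ) : ℂ) ^ n‖ ≤ 1 / ((k + 1 : ℕ) : ℝ) ^ n := by
  rw [norm_div, norm_pow, norm_pow, Complex.norm_natCast]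
  gcongr
  exact pow_le_one₀ (norm_nonneg _) hz

theorem summable_bound {n : ℕ} (hn : 2 ≤ n) :
    Summable fun k : ℕ => 1 / ((k + 1 : ℕ) : ℝ) ^ n :=
  (summable_nat_add_iff 1).2 (Real.summable_one_div_nat_pow.2 (by lia))

theorem Li_summable {n : ℕ} (hn : 2 ≤ n) {z : ℂ} (hz : ‖z‖ ≤ 1) :
    Summable fun k : ℕ => z ^ (k + 1) / ((k + 1 : ℕ) : ℂ) ^ n :=
  .of_norm_bounded (summable_bound hn) fun k => Li_term_norm_le n k hz

/-- For `n ≥ 2` the polylogarithm is continuous up to the unit circle, which is needed because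
some of the arguments below have modulus one. -/
theorem Li_continuousOn {n : ℕ} (hn : 2 ≤ n) : ContinuousOn (Li n) (Metric.closedBall 0 1) := by
  refine continuousOn_tsum (fun k => by fun_prop) (summable_bound hn) fun k z hz => ?_
  exact Li_term_norm_le n k (by simpa using hz)

theorem Li_one {z : ℂ} (hz : ‖z‖ < 1) : Li 1 z = -log (1 - z) := by
  have h := Complex.hasSum_taylorSeries_neg_log hz
  rw [← hasSum_nat_add_iff' 1] at h
  simpa [Li] using h.tsum_eq

theorem Li_hasDerivAt {n : ℕ} {z : ℂ} (hz : ‖z‖ < 1) (hz0 : z ≠ 0) :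
    HasDerivAt (Li (n + 1)) (Li n z / z) z := by
  obtain ⟨r, hzr, hr⟩ := exists_between hz
  have hr0 : 0 < r := (norm_nonneg z).trans_lt hzr
  have key := hasDerivAt_tsum_of_isPreconnected (𝕜 := ℂ)
    (g := fun (k : ℕ) (z : ℂ) => z ^ (k + 1) / ((k + 1 : ℕ) : ℂ) ^ (n + 1))
    (g' := fun (k : ℕ) (z : ℂ) => z ^ k / ((k + 1 : ℕ) : ℂ) ^ n)
    (u := fun k : ℕ => r ^ k) (t := Metric.ball 0 r) (y₀ := 0) (y := z)
    (summable_geometric_of_lt_one hr0.le hr) Metric.isOpen_ball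
    (convex_ball (0 : ℂ) r).isPreconnected ?_ ?_ (by simpa using hr0) ?_ (by simpa using hzr)
  · refine HasDerivAt.congr_deriv key ?_
    rw [Li, ← tsum_div_const]
    congr 1
    ext k
    rw [pow_succ]
    field_simp
  · intro k y _
    have h := (hasDerivAt_pow (k + 1) y).div_const (((k + 1 : ℕ) : ℂ) ^ (n + 1))
    refine h.congr_deriv ?_
    have : ((k + 1 : ℕ) : ℂ) ≠ 0 := by exact_mod_cast k.succ_ne_zero
    rw [Nat.add_sub_cancel]
    field_simp
    ring
  · intro k y hy
    have hy' : ‖y‖ < r := by simpa using hy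
    rw [norm_div, norm_pow, norm_pow, Complex.norm_natCast]
    have h1 : (1 : ℝ) ≤ ((k + 1 : ℕ) : ℝ) ^ n := one_le_pow₀ (by norm_cast; lia)
    calc ‖y‖ ^ k / ((k + 1 : ℕ) : ℝ) ^ n ≤ ‖y‖ ^ k := div_le_self (by positivity) h1
      _ ≤ r ^ k := by gcongr
  · simp

/-- The chain rule for `Li (n + 1)` along a path `exp (w y)` in the closed unit disc, with `g` a
continuous extension of `Li n` to the closed disc. On the unit circle the series cannot be
differentiated termwise; instead the path is shrunk by a factor `s < 1`, and the derivatives converge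
uniformly near `x` as `s → 1`. -/
theorem Li_exp_hasDerivAt {n : ℕ} (hn : 1 ≤ n) {g : ℂ → ℂ} {w w' : ℝ → ℂ} {x : ℝ}
    (hg : ∀ z : ℂ, ‖z‖ < 1 → Li n z = g z)
    (hgc : ContinuousWithinAt g (Metric.closedBall 0 1) (exp (w x)))
    (hw : ∀ᶠ y in 𝓝 x, HasDerivAt w (w' y) y) (hw' : ContinuousAt w' x)
    (hre : ∀ᶠ y in 𝓝 x, (w y).re ≤ 0) :
    HasDerivAt (fun y => Li (n + 1) (exp (w y))) (g (exp (w x)) * w' x) x := by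
  have hnorm : ∀ y, (w y).re ≤ 0 → ‖exp (w y)‖ ≤ 1 := fun y hy => by
    rw [Complex.norm_exp]; exact Real.exp_le_one_iff.2 hy
  have hs : ∀ᶠ s : ℝ in 𝓝[<] 1, 0 < s ∧ s < 1 := by
    filter_upwards [Ioo_mem_nhdsLT (show (0 : ℝ) < 1 by norm_num)] with s hs using hs
  have hmul : ∀ (s : ℝ) y, 0 < s ∧ s < 1 → (w y).re ≤ 0 → ‖(s : ℂ) * exp (w y)‖ < 1 := by
    intro s y hs hy
    rw [norm_mul, Complex.norm_real, Real.norm_of_nonneg hs.1.le]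
    nlinarith [hnorm y hy, norm_nonneg (exp (w y))]
  have hcw : ContinuousAt w x := hw.self_of_nhds.continuousAt
  refine hasDerivAt_of_tendstoUniformlyOnFilter (l := 𝓝[<] (1 : ℝ))
    (f := fun (s : ℝ) y => Li (n + 1) ((s : ℂ) * exp (w y)))
    (f' := fun (s : ℝ) y => g ((s : ℂ) * exp (w y)) * w' y)
    (g' := fun y => g (exp (w y)) * w' y) ?_ ?_ ?_
  · have hlim : Tendsto (fun q : ℝ × ℝ => g ((q.1 : ℂ) * exp (w q.2)) * w' q.2)
        (𝓝[<] 1 ×ˢ 𝓝 x) (𝓝 (g (exp (w x)) * w' x)) := by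
      refine Tendsto.mul ?_ (hw'.tendsto.comp tendsto_snd)
      refine hgc.tendsto.comp (tendsto_nhdsWithin_iff.2 ⟨?_, ?_⟩)
      · have h1 : Tendsto (fun q : ℝ × ℝ => (q.1 : ℂ)) (𝓝[<] 1 ×ˢ 𝓝 x) (𝓝 ((1 : ℝ) : ℂ)) :=
          (Complex.continuous_ofReal.tendsto 1).comp
            ((tendsto_nhdsWithin_of_tendsto_nhds tendsto_id).comp tendsto_fst)
        have h2 : Tendsto (fun q : ℝ × ℝ => exp (w q.2)) (𝓝[<] 1 ×ˢ 𝓝 x) (𝓝 (exp (w x))) :=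
          (Complex.continuous_exp.continuousAt.comp hcw).tendsto.comp tendsto_snd
        simpa using h1.mul h2
      · filter_upwards [hs.prod_mk hre] with q hq
        simpa using (hmul q.1 q.2 hq.1 hq.2).le
    have hlim2 : Tendsto (fun q : ℝ × ℝ => g (exp (w q.2)) * w' q.2)
        (𝓝[<] 1 ×ˢ 𝓝 x) (𝓝 (g (exp (w x)) * w' x)) := by
      refine Tendsto.mul ?_ (hw'.tendsto.comp tendsto_snd)
      refine hgc.tendsto.comp (tendsto_nhdsWithin_iff.2 ⟨?_, ?_⟩)
      · exact (Complex.continuous_exp.continuousAt.comp hcw).tendsto.comp tendsto_snd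
      · filter_upwards [hs.prod_mk hre] with q hq
        simpa using hnorm q.2 hq.2
    -- two functions with the same limit at `x` are uniformly close near `x`
    rw [tendstoUniformlyOnFilter_iff_tendsto]
    exact (hlim2.prodMk_nhds hlim).mono_right (nhds_le_uniformity _)
  · filter_upwards [hs.prod_mk (hw.and hre)] with q hq
    obtain ⟨hq1, hq2, hq3⟩ := hq
    have hlt := hmul q.1 q.2 hq1 hq3
    have hne : (q.1 : ℂ) * exp (w q.2) ≠ 0 :=
      mul_ne_zero (by exact_mod_cast hq1.1.ne') (Complex.exp_ne_zero _)
    have h := (Li_hasDerivAt (n := n) hlt hne).comp q.2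
      ((hq2.cexp).const_mul (q.1 : ℂ))
    rw [hg _ hlt] at h
    refine h.congr_deriv ?_
    have hq0 : (q.1 : ℂ) ≠ 0 := by exact_mod_cast hq1.1.ne'
    field_simp
  · filter_upwards [hre] with y hy
    have hc := Li_continuousOn (n := n + 1) (by lia) (exp (w y)) (by simpa using hnorm y hy)
    refine hc.tendsto.comp (tendsto_nhdsWithin_iff.2 ⟨?_, ?_⟩)
    · have h1 : Tendsto (fun s : ℝ => (s : ℂ)) (𝓝[<] 1) (𝓝 ((1 : ℝ) : ℂ)) :=
          (Complex.continuous_ofReal.tendsto 1).comp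
            (tendsto_nhdsWithin_of_tendsto_nhds tendsto_id)
      simpa using h1.mul_const (exp (w y))
    · filter_upwards [hs] with s hs'
      simpa using (hmul s y hs' hy).le

/-! ### Distribution relations and special values -/

theorem Li_conj (n : ℕ) (z : ℂ) : Li n (starRingEnd ℂ z) = starRingEnd ℂ (Li n z) := by
  rw [Li, Li, Complex.conj_tsum]
  simp

/-- The duplication formula. -/
theorem Li_sq {n : ℕ} (hn : 2 ≤ n) {z : ℂ} (hz : ‖z‖ ≤ 1) :
    Li n (z ^ 2) * 2 = 2 ^ n * (Li n z + Li n (-z)) := by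
  have hz2 : ‖-z‖ ≤ 1 := by simpa
  rw [Li, Li, Li, ← (Li_summable hn hz).tsum_add (Li_summable hn hz2)]
  have he : Function.Injective (fun k : ℕ => 2 * k + 1) := fun a b hab => by
    simp only at hab; lia
  rw [← he.tsum_eq (f := fun k : ℕ => z ^ (k + 1) / ((k + 1 : ℕ) : ℂ) ^ n +
    (-z) ^ (k + 1) / ((k + 1 : ℕ) : ℂ) ^ n), ← tsum_mul_left, ← tsum_mul_right]
  · congr 1
    ext k
    have : ((2 * k + 1 + 1 : ℕ) : ℂ) = 2 * ((k + 1 : ℕ) : ℂ) := by push_cast; ring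
    have h0 : ((k + 1 : ℕ) : ℂ) ≠ 0 := by exact_mod_cast k.succ_ne_zero
    rw [this, show 2 * k + 1 + 1 = 2 * (k + 1) by ring, pow_mul, pow_mul, neg_sq, mul_pow]
    field_simp
    ring
  · intro k hk
    by_contra hc
    apply hk
    have hodd : Odd (k + 1) := by
      by_contra h2
      rw [Nat.not_odd_iff_even] at h2
      obtain ⟨j, hj⟩ := h2
      exact hc ⟨j - 1, by simp only; lia⟩
    simp only [hodd.neg_pow]
    ring

/-- The triplication formula at a primitive cube root of unity `z`. -/
theorem Li_cube {n : ℕ} (hn : 2 ≤ n) {z : ℂ} (hz : z ^ 2 + z + 1 = 0) (hz1 : ‖z‖ ≤ 1) :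
    (Li n 1 + Li n z + Li n (z ^ 2)) * 3 ^ n = 3 * Li n 1 := by
  have h3 : z ^ 3 = 1 := by linear_combination (z - 1) * hz
  have s0 := Li_summable hn (z := 1) (by simp)
  have s1 := Li_summable hn hz1
  have s2 := Li_summable hn (z := z ^ 2) (by rw [norm_pow]; exact pow_le_one₀ (norm_nonneg _) hz1)
  rw [Li, Li, Li, ← s0.tsum_add s1, ← (s0.add s1).tsum_add s2]
  have he : Function.Injective (fun k : ℕ => 3 * k + 2) := fun a b hab => by
    simp only at hab; lia
  rw [← he.tsum_eq, ← tsum_mul_left, ← tsum_mul_right]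
  · congr 1
    ext k
    have : ((3 * k + 2 + 1 : ℕ) : ℂ) = 3 * ((k + 1 : ℕ) : ℂ) := by push_cast; ring
    have h0 : ((k + 1 : ℕ) : ℂ) ≠ 0 := by exact_mod_cast k.succ_ne_zero
    have h4 : (z ^ 2) ^ 3 = 1 := by rw [← pow_mul, mul_comm, pow_mul, h3, one_pow]
    rw [this, show 3 * k + 2 + 1 = 3 * (k + 1) by ring, pow_mul z, pow_mul (z ^ 2), h3, h4,
      mul_pow]
    simp only [one_pow]
    field_simp
    ring
  · intro k hk
    by_contra hc
    apply hk
    have hz4 : ∀ j, z ^ (3 * j) = 1 := fun j => by rw [pow_mul, h3, one_pow]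
    have hmod : k % 3 = 0 ∨ k % 3 = 1 := by
      by_contra h2
      exact hc ⟨k / 3, by simp only; lia⟩
    have hk3 := Nat.div_add_mod k 3
    simp only [one_pow, ← add_div, div_eq_zero_iff]
    left
    -- off the multiples of three the terms cancel, since `1 + z + z ^ 2 = 0`
    rcases hmod with h | h <;> rw [h] at hk3 <;> rw [← hk3]
    · rw [add_zero, ← pow_mul z, pow_succ, hz4,
        show 2 * (3 * (k / 3) + 1) = 3 * (2 * (k / 3)) + 2 by ring,
        pow_add, hz4]
      linear_combination hz
    · rw [← pow_mul z, add_assoc _ 1 1, pow_add, hz4,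
        show 2 * (3 * (k / 3) + (1 + 1)) = 3 * (2 * (k / 3) + 1) + 1 by ring, pow_add _ (3 * _), hz4]
      linear_combination hz

theorem Li_two_one : Li 2 1 = (Real.pi : ℂ) ^ 2 / 6 := by
  have h := (hasSum_nat_add_iff' 1).2 hasSum_zeta_two
  simp only [Finset.range_one, Finset.sum_singleton] at h
  have h2 := (Complex.hasSum_ofReal.2 h).tsum_eq
  rw [Li]
  push_cast at h2 ⊢
  simpa using h2

theorem Li_four_I_im : (Li 4 I).im = beta4 := by
  have hs := (Li_summable (n := 4) (by norm_num) (z := I) (by simp)).hasSum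
  have h := (Complex.hasSum_im hs).tsum_eq
  rw [Li, ← h, beta4]
  have he : Function.Injective (fun k : ℕ => 2 * k) := fun a b hab => by
    simp only at hab; lia
  rw [← he.tsum_eq]
  · congr 1
    ext k
    rw [pow_succ, pow_mul, I_sq, ← ofReal_natCast, ← ofReal_pow, div_ofReal_im]
    congr 1
    rw [show (-1 : ℂ) = ((-1 : ℝ) : ℂ) by simp, ← ofReal_pow, im_ofReal_mul, I_im, mul_one]
  · intro k hk
    by_contra hc
    apply hk
    have : k % 2 = 1 := by
      by_contra h2
      exact hc ⟨k / 2, by simp only; lia⟩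
    obtain ⟨j, rfl⟩ : ∃ j, k = 2 * j + 1 := ⟨k / 2, by lia⟩
    beta_reduce
    rw [show 2 * j + 1 + 1 = 2 * (j + 1) by ring, pow_mul, I_sq, ← ofReal_natCast, ← ofReal_pow,
      div_ofReal_im, show (-1 : ℂ) = ((-1 : ℝ) : ℂ) by simp, ← ofReal_pow, ofReal_im, zero_div]

/-- The Fourier series of the third Bernoulli polynomial at `1 / 3`. -/
theorem Li_three_im : (Li 3 (exp (2 * Real.pi / 3 * I))).im = 2 * Real.pi ^ 3 / 81 := by
  have hs := (Li_summable (n := 3) (by norm_num) (z := exp (2 * Real.pi / 3 * I)) (by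
    rw [show (2 * Real.pi / 3 * I : ℂ) = ((2 * Real.pi / 3 : ℝ) : ℂ) * I by push_cast; ring,
      Complex.norm_exp_ofReal_mul_I])).hasSum
  have h := (Complex.hasSum_im hs)
  have h2 := hasSum_one_div_nat_pow_mul_sin (k := 1) one_ne_zero (x := 1 / 3)
    ⟨by norm_num, by norm_num⟩
  rw [← hasSum_nat_add_iff' 1] at h2
  rw [Li]
  refine h.unique ?_
  convert! h2 using 1
  · ext k
    rw [← Complex.exp_nat_mul, show (((k + 1 : ℕ) : ℂ) * (2 * Real.pi / 3 * I)) =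
      ((2 * Real.pi * ((k + 1 : ℕ) : ℝ) * (1 / 3) : ℝ) : ℂ) * I by push_cast; ring,
      ← ofReal_natCast, ← ofReal_pow, div_ofReal_im, Complex.exp_ofReal_mul_I_im]
    ring
  · have hb : Polynomial.bernoulli 3 = Polynomial.X ^ 3 - Polynomial.C (3 / 2) * Polynomial.X ^ 2
        + Polynomial.C (1 / 2) * Polynomial.X := by
      simp [Polynomial.bernoulli, Finset.sum_range_succ, bernoulli, bernoulli'_two, bernoulli'_three]
      simp only [← Polynomial.C_mul_X_pow_eq_monomial]
      norm_num
      ring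
    simp [hb, Nat.factorial]
    ring

/-! ### The path and the combinations of polylogarithms along it -/

/-- `log ρ` for the point `p = ρ e^{iθ}` of the line `Re p = 1 / 2`, that is `ρ = 1 / (2 cos θ)`. -/
noncomputable def logRho (θ : ℝ) : ℝ := -Real.log (2 * Real.cos θ)

/-- The logarithm `m log ρ + (n θ + e) i` of the argument `R = e^{ie} ρ ^ m e^{inθ}` of the
polylogarithms. -/
noncomputable def expo (m n e θ : ℝ) : ℂ := (m * logRho θ : ℝ) + (n * θ + e : ℝ) * I

/-- The logarithm of `R` up to an additive constant, normalized to vanish at `θ = π / 4`; it does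
not depend on `e`. -/
noncomputable def shiftLog (m n θ : ℝ) : ℂ :=
  (m * (logRho θ + Real.log 2 / 2) : ℝ) + (n * (θ - Real.pi / 4) : ℝ) * I

/-- The combination `-6 Li₄(R) + 6 L Li₃(R) - 3 L² Li₂(R)` of polylogarithms of
`R = exp (expo m n e θ)`, with `L = shiftLog m n θ`. Since `L' = R' / R`, the terms with `Li₃` and `Li₂`
cancel in its derivative, which is `3 L² L' log (1 - R)`. -/
noncomputable def liComb (m n e θ : ℝ) : ℂ :=
  -6 * Li 4 (exp (expo m n e θ)) + 6 * shiftLog m n θ * Li 3 (exp (expo m n e θ))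
    - 3 * shiftLog m n θ ^ 2 * Li 2 (exp (expo m n e θ))

theorem cos_ge {θ : ℝ} (h : θ ∈ Icc (Real.pi / 4) (Real.pi / 3)) : 1 ≤ 2 * Real.cos θ := by
  have hp := Real.pi_pos
  have := Real.cos_le_cos_of_nonneg_of_le_pi (by linarith [h.1]) (by linarith) h.2
  rw [Real.cos_pi_div_three] at this
  linarith

theorem cos_gt {θ : ℝ} (h : θ ∈ Ioo (Real.pi / 4) (Real.pi / 3)) : 1 < 2 * Real.cos θ := by
  have hp := Real.pi_pos
  have := Real.cos_lt_cos_of_nonneg_of_le_pi (by linarith [h.1]) (by linarith) h.2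
  rw [Real.cos_pi_div_three] at this
  linarith

theorem logRho_nonpos {θ : ℝ} (h : θ ∈ Icc (Real.pi / 4) (Real.pi / 3)) : logRho θ ≤ 0 :=
  neg_nonpos.2 (Real.log_nonneg (cos_ge h))

theorem logRho_hasDerivAt {θ : ℝ} (h : θ ∈ Icc (Real.pi / 4) (Real.pi / 3)) :
    HasDerivAt logRho (Real.tan θ) θ := by
  have h1 := cos_ge h
  have h2 := (((Real.hasDerivAt_cos θ).const_mul 2).log (by linarith)).neg
  refine h2.congr_deriv ?_
  rw [Real.tan_eq_sin_div_cos]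
  have : Real.cos θ ≠ 0 := by intro h0; rw [h0] at h1; norm_num at h1
  field_simp

theorem expo_hasDerivAt (m n e : ℝ) {θ : ℝ} (h : θ ∈ Icc (Real.pi / 4) (Real.pi / 3)) :
    HasDerivAt (expo m n e) (m * Real.tan θ + n * I) θ := by
  have h1 := ((logRho_hasDerivAt h).const_mul m).ofReal_comp
  have h2 := ((((hasDerivAt_id θ).const_mul n).add_const e).ofReal_comp).mul_const I
  refine (h1.add h2).congr_deriv ?_
  push_cast
  ring

theorem shiftLog_hasDerivAt (m n : ℝ) {θ : ℝ} (h : θ ∈ Icc (Real.pi / 4) (Real.pi / 3)) :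
    HasDerivAt (shiftLog m n) (m * Real.tan θ + n * I) θ := by
  have h1 := (((logRho_hasDerivAt h).add_const (Real.log 2 / 2)).const_mul m).ofReal_comp
  have h2 := ((((hasDerivAt_id θ).sub_const (Real.pi / 4)).const_mul n).ofReal_comp).mul_const I
  refine (h1.add h2).congr_deriv ?_
  push_cast
  ring

theorem expo_re (m n e θ : ℝ) : (expo m n e θ).re = m * logRho θ := by simp [expo]

theorem expo_norm {m n e θ : ℝ} (hm : 0 ≤ m) (h : θ ∈ Icc (Real.pi / 4) (Real.pi / 3)) :
    ‖exp (expo m n e θ)‖ ≤ 1 := by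
  rw [Complex.norm_exp, expo_re]
  exact Real.exp_le_one_iff.2 (mul_nonpos_of_nonneg_of_nonpos hm (logRho_nonpos h))

theorem liComb_continuousOn {m : ℝ} (n e : ℝ) (hm : 0 ≤ m) :
    ContinuousOn (liComb m n e) (Icc (Real.pi / 4) (Real.pi / 3)) := by
  have hE : ContinuousOn (fun θ => exp (expo m n e θ)) (Icc (Real.pi / 4) (Real.pi / 3)) :=
    fun θ h => (expo_hasDerivAt m n e h).cexp.continuousAt.continuousWithinAt
  have hS : ContinuousOn (shiftLog m n) (Icc (Real.pi / 4) (Real.pi / 3)) :=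
    fun θ h => (shiftLog_hasDerivAt m n h).continuousAt.continuousWithinAt
  have hmaps : MapsTo (fun θ => exp (expo m n e θ)) (Icc (Real.pi / 4) (Real.pi / 3))
      (Metric.closedBall 0 1) := fun θ h => by simpa using expo_norm (n := n) (e := e) hm h
  have h4 := (Li_continuousOn (n := 4) (by norm_num)).comp hE hmaps
  have h3 := (Li_continuousOn (n := 3) (by norm_num)).comp hE hmaps
  have h2 := (Li_continuousOn (n := 2) (by norm_num)).comp hE hmaps
  exact ((continuousOn_const.mul h4).add ((continuousOn_const.mul hS).mul h3)).sub
    ((continuousOn_const.mul (hS.pow 2)).mul h2)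

theorem neg_log_continuousWithinAt {z : ℂ} (hz : ‖z‖ ≤ 1) (hz1 : z ≠ 1) :
    ContinuousWithinAt (fun z => -log (1 - z)) (Metric.closedBall 0 1) z := by
  refine ContinuousAt.continuousWithinAt ?_
  have : 1 - z ∈ slitPlane := by
    rw [mem_slitPlane_iff]
    by_contra! hc
    obtain ⟨h1, h2⟩ := hc
    simp only [sub_re, one_re, sub_im, one_im] at h1 h2
    have h3 := z.re_le_norm
    exact hz1 (Complex.ext (by simp only [one_re]; linarith) (by simp only [one_im]; linarith))
  exact ((continuousAt_const.sub continuousAt_id).clog this).neg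

/-- The derivative of `liComb`, where `M` is the principal logarithm of `1 - R`. -/
theorem liComb_hasDerivAt {m n e θ : ℝ} (hm : 0 ≤ m) (h : θ ∈ Ioo (Real.pi / 4) (Real.pi / 3))
    {M : ℂ} (hM : 1 - exp (expo m n e θ) = exp M) (hM1 : -Real.pi < M.im) (hM2 : M.im ≤ Real.pi) :
    HasDerivAt (liComb m n e) (3 * shiftLog m n θ ^ 2 * (m * Real.tan θ + n * I) * M) θ := by
  have hI := Ioo_subset_Icc_self h
  have hlog : log (1 - exp (expo m n e θ)) = M := by rw [hM, Complex.log_exp hM1 hM2]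
  have hne : exp (expo m n e θ) ≠ 1 := fun h0 => by
    rw [h0, sub_self] at hM
    exact Complex.exp_ne_zero _ hM.symm
  have hev : ∀ᶠ y in 𝓝 θ, y ∈ Icc (Real.pi / 4) (Real.pi / 3) := Icc_mem_nhds h.1 h.2
  have hw : ∀ᶠ y in 𝓝 θ, HasDerivAt (expo m n e) (m * Real.tan y + n * I) y :=
    hev.mono fun y hy => expo_hasDerivAt m n e hy
  have hcos : Real.cos θ ≠ 0 := by
    intro h0; have := cos_ge hI; rw [h0] at this; norm_num at this
  have hw' : ContinuousAt (fun y : ℝ => (m : ℂ) * Real.tan y + n * I) θ :=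
    (continuousAt_const.mul (Complex.continuous_ofReal.continuousAt.comp
      (Real.continuousAt_tan.2 hcos))).add continuousAt_const
  have hre : ∀ᶠ y in 𝓝 θ, (expo m n e y).re ≤ 0 := hev.mono fun y hy => by
    rw [expo_re]
    exact mul_nonpos_of_nonneg_of_nonpos hm (logRho_nonpos hy)
  have hnorm := expo_norm (n := n) (e := e) hm hI
  have hmem : exp (expo m n e θ) ∈ Metric.closedBall (0 : ℂ) 1 := by simpa using hnorm
  have d2 := Li_exp_hasDerivAt le_rfl (fun z hz => Li_one hz)
    (neg_log_continuousWithinAt hnorm hne) hw hw' hre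
  have d3 := Li_exp_hasDerivAt (n := 2) (by norm_num) (fun z _ => rfl)
    (Li_continuousOn le_rfl _ hmem) hw hw' hre
  have d4 := Li_exp_hasDerivAt (n := 3) (by norm_num) (fun z _ => rfl)
    (Li_continuousOn (by norm_num) _ hmem) hw hw' hre
  have dS := shiftLog_hasDerivAt m n hI
  have d := ((d4.const_mul (-6)).add ((dS.const_mul 6).mul d3)).sub
    (((dS.pow 2).const_mul 3).mul d2)
  refine d.congr_deriv ?_
  rw [hlog]
  simp only [Pi.pow_apply]
  push_cast
  ring

/-! ### The functional equation -/

/-- The combination of polylogarithms whose arguments are, with `p = ρ e^{iθ}` and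
`p + p̄ = 1`, in order: `-p³`, `p²`, `p`, `-p² / p̄`, `p / p̄`, `(p / p̄)³`, `-p / p̄`. -/
noncomputable def total (θ : ℝ) : ℂ :=
  -8 * liComb 3 3 Real.pi θ + 27 * liComb 2 2 0 θ - 72 * liComb 1 1 0 θ
    + 72 * liComb 1 3 Real.pi θ + 216 * liComb 0 2 0 θ - 8 * liComb 0 6 0 θ
    + 144 * liComb 0 2 Real.pi θ

/-- The polynomial in `l = log ρ + log 2 / 2` and `φ = θ - π / 4` with the same derivative as the
imaginary part of `total`. -/
noncomputable def prim (l φ : ℝ) : ℝ :=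
  -216 * l ^ 3 * φ - 18 * Real.pi * l ^ 3 + 108 * Real.log 2 * l ^ 2 * φ - 1512 * l * φ ^ 3
    - 378 * Real.pi * l * φ ^ 2 + 252 * Real.log 2 * φ ^ 3

theorem exp_expo (m n : ℕ) (e θ : ℝ) :
    exp (expo m n e θ) = exp (logRho θ) ^ m * exp (θ * I) ^ n * exp (e * I) := by
  rw [expo, ← Complex.exp_nat_mul, ← Complex.exp_nat_mul, ← Complex.exp_add, ← Complex.exp_add]
  congr 1
  push_cast
  ring

/-- The functional equation in differential form. Each `1 - R` is, up to a constant, a product of powers of `1 + p`,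
`p`, `p̄`, `1 - p p̄` and `sin θ`; the contributions of `log (1 + p)`, `log (1 - p p̄)` and `log sin θ` to
the imaginary part of the derivative cancel, leaving a polynomial in `log ρ` and `θ`. -/
theorem total_hasDerivAt {θ : ℝ} (h : θ ∈ Ioo (Real.pi / 4) (Real.pi / 3)) :
    ∃ D, HasDerivAt total D θ ∧ HasDerivAt
      (fun y => prim (logRho y + Real.log 2 / 2) (y - Real.pi / 4)) D.im θ := by
  have hp := Real.pi_pos
  have h1 := h.1
  have h2 := h.2
  have hc := cos_gt h
  have hsin : 0 < Real.sin θ := Real.sin_pos_of_pos_of_lt_pi (by linarith) (by linarith)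
  have hneg : logRho θ < 0 := neg_neg_of_pos (Real.log_pos hc)
  have hr1 : Real.exp (logRho θ) < 1 := by simpa using hneg
  have hr0 := Real.exp_pos (logRho θ)
  have hrc : Real.exp (logRho θ) * (2 * Real.cos θ) = 1 := by
    rw [logRho, Real.exp_neg, Real.exp_log (by linarith)]
    exact inv_mul_cancel₀ (by linarith)
  have hq : 0 < 1 - Real.exp (logRho θ) ^ 2 := by nlinarith
  set X := logRho θ with hX
  set Q := Real.log (1 - Real.exp X ^ 2) with hQ
  set S := Real.log (2 * Real.sin θ) with hS
  have eQ : exp (Q : ℂ) = 1 - exp (X : ℂ) ^ 2 := by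
    rw [← ofReal_exp, hQ, Real.exp_log hq]; push_cast; rfl
  have eS : exp (S : ℂ) = 2 * Complex.sin θ := by
    rw [← ofReal_exp, hS, Real.exp_log (by linarith)]; push_cast; rfl
  set a := exp (θ * I) with ha
  set b := exp (-(θ * I)) with hb
  set r := exp (X : ℂ) with hr
  have hab : a * b = 1 := by rw [ha, hb, ← Complex.exp_add]; simp
  have hrab : r * (a + b) = 1 := by
    have : a + b = 2 * Complex.cos θ := by
      rw [Complex.cos, ha, hb, neg_mul]; ring
    rw [this, hr, ← ofReal_exp]
    exact_mod_cast hrc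
  have hSab : exp (S : ℂ) = -I * (a - b) := by
    rw [eS, Complex.sin, ha, hb, neg_mul]; ring
  have hr' : exp (-(X : ℂ)) = a + b := by
    rw [Complex.exp_neg, ← hr]
    exact (eq_inv_of_mul_eq_one_right hrab).symm
  have hpi2 : exp (-(Real.pi / 2 * I)) = -I := by
    rw [Complex.exp_neg, Complex.exp_pi_div_two_mul_I, Complex.inv_I]
  have hP0 : 0 < (1 + r * a).re := by
    rw [hr, ha, ← Complex.exp_add]
    rw [Complex.add_re, Complex.exp_re]
    simp only [one_re, add_re, ofReal_re, mul_re, I_re, ofReal_im, I_im, add_im, mul_im]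
    have : 0 < Real.cos θ := by linarith
    simp only [mul_zero, sub_zero, add_zero, mul_one, zero_add]
    positivity
  -- `P`, `Q`, `S` are the logarithms of `1 + p`, `1 - p p̄` and `2 sin θ`, with `p = r * a`
  set P := log (1 + r * a) with hP
  have eP : exp P = 1 + r * a := Complex.exp_log (fun h0 => by rw [h0] at hP0; simp at hP0)
  -- `1 + p` has positive real part, which keeps the logarithms below on the principal branch
  have hPim := abs_lt.1 (Complex.abs_arg_lt_pi_div_two_iff.2 (Or.inl hP0))
  rw [← Complex.log_im, ← hP] at hPim
  -- the factorizations of `1 - R` for the seven arguments `R`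
  have M1 : 1 - exp (expo 3 3 Real.pi θ) = exp (P + Q) := by
    have := exp_expo 3 3 Real.pi θ
    push_cast at this
    rw [this, Complex.exp_pi_mul_I, Complex.exp_add, eP, eQ, ← hX, ← hr, ← ha]
    grind
  have M2 : 1 - exp (expo 2 2 0 θ) = exp (P + X + -(θ * I)) := by
    have := exp_expo 2 2 0 θ
    push_cast at this
    rw [this, Complex.exp_add, Complex.exp_add, eP, ← hX, ← hr, ← ha, ← hb]
    simp only [zero_mul, Complex.exp_zero]
    grind
  have M3 : 1 - exp (expo 1 1 0 θ) = exp (X + -(θ * I)) := by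
    have := exp_expo 1 1 0 θ
    push_cast at this
    rw [this, Complex.exp_add, ← hX, ← hr, ← ha, ← hb]
    simp only [zero_mul, Complex.exp_zero]
    grind
  have M4 : 1 - exp (expo 1 3 Real.pi θ) = exp (Q + -X + θ * I) := by
    have := exp_expo 1 3 Real.pi θ
    push_cast at this
    rw [this, Complex.exp_pi_mul_I, Complex.exp_add, Complex.exp_add, eQ, hr', ← hX, ← hr, ← ha]
    grind
  have M5 : 1 - exp (expo 0 2 0 θ) = exp (S + θ * I + -(Real.pi / 2 * I)) := by
    have := exp_expo 0 2 0 θ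
    push_cast at this
    rw [this, Complex.exp_add, Complex.exp_add, hSab, hpi2, ← ha]
    simp only [zero_mul, Complex.exp_zero]
    have := I_sq
    grind
  have M6 : 1 - exp (expo 0 6 0 θ) =
      exp (S + Q + -X + -X + θ * I + θ * I + θ * I + -(Real.pi / 2 * I)) := by
    have := exp_expo 0 6 0 θ
    push_cast at this
    rw [this]
    simp only [Complex.exp_add]
    rw [hSab, hpi2, eQ, hr', ← ha, ← hr]
    simp only [zero_mul, Complex.exp_zero]
    have hi := I_sq
    have hq2 : (1 - r ^ 2) * (a + b) * (a + b) = a ^ 2 + a * b + b ^ 2 := by grind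
    have h6 : a ^ 3 * (b - a) * (a ^ 2 + a * b + b ^ 2) = 1 - a ^ 6 := by
      linear_combination (a ^ 2 * b ^ 2 + a * b + 1) * hab
    linear_combination (-(1 - r ^ 2) * (a + b) * (a + b) * a ^ 3 * (a - b)) * hi -
      h6 - a ^ 3 * (b - a) * hq2
  have M7 : 1 - exp (expo 0 2 Real.pi θ) = exp (-X + θ * I) := by
    have := exp_expo 0 2 Real.pi θ
    push_cast at this
    rw [this, Complex.exp_pi_mul_I, Complex.exp_add, hr', ← ha]
    grind
  have hI : ((Real.pi : ℂ) / 2) = ((Real.pi / 2 : ℝ) : ℂ) := by push_cast; rfl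
  have D1 := liComb_hasDerivAt (by norm_num) h M1 (by simp; linarith) (by simp; linarith)
  have D2 := liComb_hasDerivAt (by norm_num) h M2 (by simp; linarith) (by simp; linarith)
  have D3 := liComb_hasDerivAt (by norm_num) h M3 (by simp; linarith) (by simp; linarith)
  have D4 := liComb_hasDerivAt (by norm_num) h M4 (by simp; linarith) (by simp; linarith)
  have D5 := liComb_hasDerivAt le_rfl h M5 (by rw [hI]; simp; linarith) (by rw [hI]; simp; linarith)
  have D6 := liComb_hasDerivAt le_rfl h M6 (by rw [hI]; simp; linarith) (by rw [hI]; simp; linarith)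
  have D7 := liComb_hasDerivAt le_rfl h M7 (by simp; linarith) (by simp; linarith)
  refine ⟨_, ((((((D1.const_mul (-8)).add (D2.const_mul 27)).sub (D3.const_mul 72)).add
    (D4.const_mul 72)).add (D5.const_mul 216)).sub (D6.const_mul 8)).add (D7.const_mul 144), ?_⟩
  have dl := (logRho_hasDerivAt (Ioo_subset_Icc_self h)).add_const (Real.log 2 / 2)
  have df := (hasDerivAt_id θ).sub_const (Real.pi / 4)
  have dK := ((((((dl.pow 3).const_mul (-216)).mul df).sub ((dl.pow 3).const_mul (18 * Real.pi))).add
    (((dl.pow 2).const_mul (108 * Real.log 2)).mul df)).sub ((dl.const_mul 1512).mul (df.pow 3))).sub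
    ((dl.const_mul (378 * Real.pi)).mul (df.pow 2)) |>.add ((df.pow 3).const_mul (252 * Real.log 2))
  refine dK.congr_deriv ?_
  rw [hI]
  obtain ⟨p1, p2, hPe⟩ : ∃ p1 p2 : ℝ, P = p1 + p2 * I := ⟨P.re, P.im, (Complex.re_add_im P).symm⟩
  simp only [shiftLog, ← hX, hPe, id]
  generalize Real.tan θ = τ
  clear_value X Q S P
  simp only [Pi.pow_apply, ← hX]
  simp [pow_succ, -Complex.ofReal_add]
  ring

theorem total_continuousOn : ContinuousOn total (Icc (Real.pi / 4) (Real.pi / 3)) := by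
  have h1 := liComb_continuousOn 3 Real.pi (m := 3) (by norm_num)
  have h2 := liComb_continuousOn 2 0 (m := 2) (by norm_num)
  have h3 := liComb_continuousOn 1 0 (m := 1) (by norm_num)
  have h4 := liComb_continuousOn 3 Real.pi (m := 1) (by norm_num)
  have h5 := liComb_continuousOn 2 0 (m := 0) le_rfl
  have h6 := liComb_continuousOn 6 0 (m := 0) le_rfl
  have h7 := liComb_continuousOn 2 Real.pi (m := 0) le_rfl
  unfold total
  fun_prop

/-- The imaginary part of `total` minus the elementary primitive takes the same value at both ends
of `[π / 4, π / 3]`, because its derivative vanishes inside. -/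
theorem total_im_sub_prim : (total (Real.pi / 3)).im
      - prim (logRho (Real.pi / 3) + Real.log 2 / 2) (Real.pi / 3 - Real.pi / 4) =
    (total (Real.pi / 4)).im
      - prim (logRho (Real.pi / 4) + Real.log 2 / 2) (Real.pi / 4 - Real.pi / 4) := by
  have hlt : Real.pi / 4 < Real.pi / 3 := by linarith [Real.pi_pos]
  have hl : ContinuousOn logRho (Icc (Real.pi / 4) (Real.pi / 3)) :=
    fun θ h => (logRho_hasDerivAt h).continuousAt.continuousWithinAt
  have hc : ContinuousOn (fun θ => (total θ).im
      - prim (logRho θ + Real.log 2 / 2) (θ - Real.pi / 4)) (Icc (Real.pi / 4) (Real.pi / 3)) := by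
    have := continuous_im.comp_continuousOn total_continuousOn
    refine this.sub ?_
    unfold prim
    fun_prop
  obtain ⟨θ, _, h⟩ := exists_hasDerivAt_eq_slope _ (fun _ => (0 : ℝ)) hlt hc fun θ hθ => by
    obtain ⟨D, h1, h2⟩ := total_hasDerivAt hθ
    exact ((imCLM.hasFDerivAt.comp_hasDerivAt θ h1).sub h2).congr_deriv (sub_self _)
  rw [eq_comm, div_eq_zero_iff] at h
  exact sub_eq_zero.1 (h.resolve_right (sub_pos.2 hlt).ne.symm)

/-! ### The values at the endpoints -/

/-- At `θ = π / 4`, where `p = (1 + i) / 2`, only the `Li₄` terms survive and the arguments are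
those of the ladder, up to complex conjugation. -/
theorem total_quarter : (total (Real.pi / 4)).im =
    -162 * ((8 / 27) * (Li 4 ((1 + I) / 4)).im - (Li 4 (-I / 2)).im
      - (16 / 3) * (Li 4 ((1 + I) / 2)).im + (80 / 27) * beta4) := by
  have hX : logRho (Real.pi / 4) = -(Real.log 2 / 2) := by
    rw [logRho, Real.cos_pi_div_four, mul_div_cancel₀ _ (by norm_num), Real.log_sqrt (by norm_num)]
  have hS : ∀ m n, shiftLog m n (Real.pi / 4) = 0 := fun m n => by simp [shiftLog, hX]
  have hs2 : ((Real.sqrt 2 : ℝ) : ℂ) ^ 2 = 2 := by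
    rw [← ofReal_pow, Real.sq_sqrt (by norm_num)]; simp
  have hr : exp ((logRho (Real.pi / 4) : ℝ) : ℂ) * Real.sqrt 2 = 1 := by
    rw [← ofReal_exp, logRho, Real.cos_pi_div_four, mul_div_cancel₀ _ (by norm_num), Real.exp_neg,
      Real.exp_log (by positivity), ← ofReal_mul, inv_mul_cancel₀ (by positivity), ofReal_one]
  have ha : exp (((Real.pi / 4 : ℝ) : ℂ) * I) = Real.sqrt 2 / 2 * (1 + I) := by
    rw [Complex.exp_mul_I, ← ofReal_cos, ← ofReal_sin, Real.cos_pi_div_four, Real.sin_pi_div_four]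
    push_cast
    ring
  have hI := I_sq
  have E := fun m n e => exp_expo m n e (Real.pi / 4)
  have E1 := E 3 3 Real.pi
  have E2 := E 2 2 0
  have E3 := E 1 1 0
  have E4 := E 1 3 Real.pi
  have E5 := E 0 2 0
  have E6 := E 0 6 0
  have E7 := E 0 2 Real.pi
  generalize exp ((logRho (Real.pi / 4) : ℝ) : ℂ) = r at *
  generalize exp (((Real.pi / 4 : ℝ) : ℂ) * I) = a at *
  -- `r` is `ρ` and `a` is `e^{iθ}`, so `r * a` is `p`
  have hra : r * a = (1 + I) / 2 := by linear_combination r * ha + (1 + I) / 2 * hr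
  have ha2 : a ^ 2 = I := by rw [ha]; linear_combination (1 + I) ^ 2 / 4 * hs2 + hI / 2
  push_cast at E1 E2 E3 E4 E5 E6 E7
  simp only [zero_mul, Complex.exp_zero, Complex.exp_pi_mul_I] at E1 E2 E3 E4 E5 E6 E7
  have F1 : exp (expo 3 3 Real.pi (Real.pi / 4)) = starRingEnd ℂ ((1 + I) / 4) := by
    rw [E1, ← mul_pow, hra]
    simp only [map_add, map_div₀, map_one, conj_I, map_ofNat]
    linear_combination (-(3 + I) / 8) * hI
  have F2 : exp (expo 2 2 0 (Real.pi / 4)) = starRingEnd ℂ (-I / 2) := by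
    rw [E2, ← mul_pow, hra]
    simp only [map_neg, map_div₀, conj_I, map_ofNat]
    linear_combination (1 / 4) * hI
  have F3 : exp (expo 1 1 0 (Real.pi / 4)) = (1 + I) / 2 := by
    rw [E3, ← mul_pow, hra]; simp
  have F4 : exp (expo 1 3 Real.pi (Real.pi / 4)) = starRingEnd ℂ ((1 + I) / 2) := by
    rw [E4]
    simp only [map_add, map_div₀, map_one, conj_I, map_ofNat]
    linear_combination -a ^ 2 * hra - (1 + I) / 2 * ha2 - hI / 2
  have F5 : exp (expo 0 2 0 (Real.pi / 4)) = I := by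
    rw [E5, ha2]; simp
  have F6 : exp (expo 0 6 0 (Real.pi / 4)) = starRingEnd ℂ I := by
    rw [E6, conj_I]
    linear_combination (a ^ 4 + a ^ 2 * I + I ^ 2) * ha2 + I * hI
  have F7 : exp (expo 0 2 Real.pi (Real.pi / 4)) = starRingEnd ℂ I := by
    rw [E7, ha2]; simp
  simp only [total, liComb, hS, F1, F2, F3, F4, F5, F6, F7, Li_conj]
  simp [← Li_four_I_im]
  ring

/-- At `θ = π / 3` the point `p` is a primitive sixth root of unity. The duplication and triplication
formulas reduce all values to `Li n 1` and `Li n (p ^ 2)`, and the values which are not elementary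
cancel. -/
theorem total_third : (total (Real.pi / 3)).im = -(20 / 3) * Real.pi ^ 3 * Real.log 2 := by
  have hX : logRho (Real.pi / 3) = 0 := by simp [logRho, Real.cos_pi_div_three]
  have hS : ∀ m n : ℝ, shiftLog m n (Real.pi / 3) =
      (m * (Real.log 2 / 2) : ℝ) + (n * (Real.pi / 12) : ℝ) * I := fun m n => by
    rw [shiftLog, hX, zero_add, show Real.pi / 3 - Real.pi / 4 = Real.pi / 12 by ring]
  have E := fun m n e => exp_expo m n e (Real.pi / 3)
  have E1 := E 3 3 Real.pi
  have E2 := E 2 2 0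
  have E3 := E 1 1 0
  have E4 := E 1 3 Real.pi
  have E5 := E 0 2 0
  have E6 := E 0 6 0
  have E7 := E 0 2 Real.pi
  obtain ⟨a, ha⟩ : ∃ a, a = exp (((Real.pi / 3 : ℝ) : ℂ) * I) := ⟨_, rfl⟩
  rw [← ha, hX] at E1 E2 E3 E4 E5 E6 E7
  push_cast at E1 E2 E3 E4 E5 E6 E7
  simp only [zero_mul, Complex.exp_zero, Complex.exp_pi_mul_I, one_pow, one_mul, mul_one,
    pow_zero, pow_one] at E1 E2 E3 E4 E5 E6 E7
  have hna : ‖a‖ = 1 := by rw [ha, Complex.norm_exp_ofReal_mul_I]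
  have hz : a ^ 2 = exp (2 * Real.pi / 3 * I) := by
    rw [ha, ← Complex.exp_nat_mul]; congr 1; push_cast; ring
  have ha' : a = 1 / 2 + (Real.sqrt 3 / 2 : ℝ) * I := by
    rw [ha, Complex.exp_mul_I, ← ofReal_cos, ← ofReal_sin, Real.cos_pi_div_three,
      Real.sin_pi_div_three]
    push_cast
    ring
  have hs3 : ((Real.sqrt 3 : ℝ) : ℂ) ^ 2 = 3 := by
    rw [← ofReal_pow, Real.sq_sqrt (by norm_num)]; simp
  have hI := I_sq
  have hquad : a ^ 2 = a - 1 := by rw [ha']; push_cast; grind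
  have hconj : starRingEnd ℂ a = -a ^ 2 := by
    rw [hquad, ha']
    simp only [map_add, map_mul, map_div₀, map_one, conj_ofReal, conj_I, map_ofNat]
    ring
  have hconj2 : starRingEnd ℂ (a ^ 2) = -a := by
    rw [map_pow, hconj]; grind
  have h3 : a ^ 3 = -1 := by grind
  have h6 : a ^ 6 = 1 := by grind
  rw [h3, neg_one_mul, neg_neg] at E1 E4
  rw [h6] at E6
  rw [mul_neg_one, ← hconj] at E7
  have hsq : ∀ n, 2 ≤ n → Li n (a ^ 2) * 2 =
      2 ^ n * (Li n a + starRingEnd ℂ (Li n (a ^ 2))) := fun n hn => by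
    rw [← Li_conj, hconj2]; exact Li_sq hn hna.le
  have hcube : ∀ n, 2 ≤ n → (Li n 1 + Li n (a ^ 2) + starRingEnd ℂ (Li n (a ^ 2))) * 3 ^ n =
      3 * Li n 1 := fun n hn => by
    have := Li_cube hn (z := a ^ 2) (by grind) (by rw [norm_pow, hna, one_pow])
    rwa [show (a ^ 2) ^ 2 = -a by grind, ← hconj2, Li_conj] at this
  have hone : ∀ n, (Li n 1).im = 0 := fun n => by
    have := Li_conj n 1
    rw [map_one] at this
    exact Complex.conj_eq_iff_im.1 this.symm
  have L3 := Li_three_im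
  rw [← hz] at L3
  have L2 := congrArg re Li_two_one
  have L2' : (Li 2 1).re = Real.pi ^ 2 / 6 := by
    rw [L2, show ((Real.pi : ℂ) ^ 2 / 6) = ((Real.pi ^ 2 / 6 : ℝ) : ℂ) by push_cast; rfl, ofReal_re]
  have s2r := congrArg re (hsq 2 le_rfl)
  have s2i := congrArg im (hsq 2 le_rfl)
  have s3r := congrArg re (hsq 3 (by norm_num))
  have s3i := congrArg im (hsq 3 (by norm_num))
  have s4i := congrArg im (hsq 4 (by norm_num))
  have c2 := congrArg re (hcube 2 le_rfl)
  have c3 := congrArg re (hcube 3 (by norm_num))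
  -- real literals let the real and imaginary parts be taken linearly
  have n1 : ∀ k : ℕ, (2 : ℂ) ^ k = ((2 ^ k : ℝ) : ℂ) := fun k => by push_cast; rfl
  have n2 : ∀ k : ℕ, (3 : ℂ) ^ k = ((3 ^ k : ℝ) : ℂ) := fun k => by push_cast; rfl
  have n3 : (2 : ℂ) = ((2 : ℝ) : ℂ) := by push_cast; rfl
  have n4 : (3 : ℂ) = ((3 : ℝ) : ℂ) := by push_cast; rfl
  simp only [n1, n2] at s2r s2i s3r s3i s4i c2 c3
  simp only [n3, n4, re_mul_ofReal, im_mul_ofReal, re_ofReal_mul, im_ofReal_mul, add_re, add_im, conj_re,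
    conj_im] at s2r s2i s3r s3i s4i c2 c3
  -- the values at `a`, and the real parts at `a ^ 2`, in terms of those at `1` and `a ^ 2`
  have v2r : (Li 2 (a ^ 2)).re = -(Real.pi ^ 2 / 18) := by linear_combination c2 / 18 - L2' / 3
  have w2r : (Li 2 a).re = Real.pi ^ 2 / 36 := by linear_combination -s2r / 4 - v2r / 2
  have w2i : (Li 2 a).im = 3 / 2 * (Li 2 (a ^ 2)).im := by linear_combination -s2i / 4
  have v3r : (Li 3 (a ^ 2)).re = -(4 / 9) * (Li 3 1).re := by linear_combination c3 / 54
  have w3r : (Li 3 a).re = 1 / 3 * (Li 3 1).re := by linear_combination -s3r / 8 - 3 / 4 * v3r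
  have w3i : (Li 3 a).im = 5 / 4 * (2 * Real.pi ^ 3 / 81) := by
    linear_combination -s3i / 8 + 5 / 4 * L3
  have w4i : (Li 4 a).im = 9 / 8 * (Li 4 (a ^ 2)).im := by linear_combination -s4i / 16
  simp only [total, liComb, hS, E1, E2, E3, E4, E5, E6, E7, Li_conj]
  generalize Real.log 2 = h at *
  generalize Li 2 (a ^ 2) = u2 at *
  generalize Li 3 (a ^ 2) = u3 at *
  generalize Li 4 (a ^ 2) = u4 at *
  simp [pow_succ, hone, v2r, w2r, w2i, v3r, w3r, w3i, w4i, L3, L2']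
  ring

end

theorem li4_beta_ladder :
    (8 / 27) * (Li 4 ((1 + I) / 4)).im - (Li 4 (-I / 2)).im
      - (16 / 3) * (Li 4 ((1 + I) / 2)).im
      + Real.pi * Real.log 2 ^ 3 / 72 - (Real.pi ^ 3 / 32) * Real.log 2 =
      -(80 / 27) * beta4 := by
  have h := total_im_sub_prim
  have h4 : logRho (Real.pi / 4) = -(Real.log 2 / 2) := by
    rw [logRho, Real.cos_pi_div_four, mul_div_cancel₀ _ (by norm_num), Real.log_sqrt (by norm_num)]
  have h3 : logRho (Real.pi / 3) = 0 := by simp [logRho, Real.cos_pi_div_three]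
  rw [total_quarter, total_third, h3, h4] at h
  simp only [prim] at h
  linear_combination h / 162
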